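/- arXiv:0905.2245 — 2 statements merged into one kernel-verified Lean document; each statement's English description precedes it below -/
import Mathlib

section
/- Let R be a basic left Harada algebra as below, let I be the two-sided ideal I := ⊕_{i,j} rad^{n_i-j+1}(e_{ij}R), and set R̄ := R/I. Then the functor F := − ⊗_R R̄ induces a bijection from the set of isomorphism classes of finitely generated right R-modules of projective dimension at most 1 onto the set of isomorphism classes of finitely generated right R̄-modules. -/
/-!
Common setup.  `K` is an algebraically closed field and `R` a finite-dimensional associative
unital `K`-algebra.  Right `R`-modules are formalized as modules over the opposite ring `Rᵐᵒᵖ`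
(so that `MulOpposite.op r • x = x * r`).
-/

open MulOpposite

/-- The right ideal `xR` of a ring `R`, as a submodule of `R` over `Rᵐᵒᵖ`. -/
def rightIdeal (R : Type) [Ring R] (x : R) : Submodule Rᵐᵒᵖ R :=
  Submodule.span Rᵐᵒᵖ {x}

/-- The Jacobson radical of a submodule `N` (the intersection of the maximal submodules of the
module `N`), viewed as a submodule of the ambient module.  Iterating this operation gives the
iterated radicals `rad^k`. -/
def radSub {A M : Type} [Ring A] [AddCommGroup M] [Module A M] (N : Submodule A M) :
    Submodule A M :=
  Submodule.map N.subtype (sInf {P : Submodule A ↥N | IsCoatom P})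

/-- A module is indecomposable if it is nonzero and admits no nontrivial direct sum
decomposition. -/
def IsIndecomposableMod (A M : Type) [Ring A] [AddCommGroup M] [Module A M] : Prop :=
  Nontrivial M ∧ ∀ N N' : Submodule A M, IsCompl N N' → N = ⊥ ∨ N' = ⊥

/-- A module has projective dimension at most one iff it admits a surjection from a projective
module with projective kernel. -/
def PdLeOne (A : Type) [Ring A] (M : Type) [AddCommGroup M] [Module A M] : Prop :=
  ∃ (P : ModuleCat.{0} A) (f : ↥P →ₗ[A] M),
    Module.Projective A ↥P ∧ Function.Surjective f ∧
      Module.Projective A ↥(LinearMap.ker f)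

/-- `Ext¹_A(M,N) = 0`, expressed by the splitting of every short exact sequence
`0 → N → E → M → 0`. -/
def Ext1Zero (A : Type) [Ring A] (M N : Type) [AddCommGroup M] [Module A M]
    [AddCommGroup N] [Module A N] : Prop :=
  ∀ (E : ModuleCat.{0} A) (i : N →ₗ[A] ↥E) (p : ↥E →ₗ[A] M),
    Function.Injective i → Function.Surjective p → LinearMap.range i = LinearMap.ker p →
    ∃ s : M →ₗ[A] ↥E, p.comp s = LinearMap.id

/-- `X ∈ add T` : `X` is a direct summand of a finite direct sum of copies of `T`. -/
def InAdd (A : Type) [Ring A] (T X : Type) [AddCommGroup T] [Module A T]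
    [AddCommGroup X] [Module A X] : Prop :=
  ∃ (k : ℕ) (f : X →ₗ[A] (Fin k → T)) (g : (Fin k → T) →ₗ[A] X),
    g.comp f = LinearMap.id

/-- `T` is a (finitely generated) tilting right `R`-module: projective dimension at most one,
no self-extensions, and there is a short exact sequence `0 → R → T₀ → T₁ → 0` with
`T₀, T₁ ∈ add T`. -/
def IsTiltingRight (R : Type) [Ring R] (T : Type) [AddCommGroup T] [Module Rᵐᵒᵖ T] : Prop :=
  Module.Finite Rᵐᵒᵖ T ∧ PdLeOne Rᵐᵒᵖ T ∧ Ext1Zero Rᵐᵒᵖ T T ∧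
    ∃ (T₀ T₁ : ModuleCat.{0} Rᵐᵒᵖ) (f : R →ₗ[Rᵐᵒᵖ] ↥T₀) (g : ↥T₀ →ₗ[Rᵐᵒᵖ] ↥T₁),
      InAdd Rᵐᵒᵖ T ↥T₀ ∧ InAdd Rᵐᵒᵖ T ↥T₁ ∧
        Function.Injective f ∧ Function.Surjective g ∧ LinearMap.range f = LinearMap.ker g

/-- `T` is basic: it is an (internal) direct sum of pairwise non-isomorphic indecomposable
submodules. -/
def IsBasicMod (A : Type) [Ring A] (T : Type) [AddCommGroup T] [Module A T] : Prop :=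
  ∃ (k : ℕ) (N : Fin k → Submodule A T),
    DirectSum.IsInternal N ∧ (∀ a, IsIndecomposableMod A ↥(N a)) ∧
      ∀ a b, a ≠ b → IsEmpty (↥(N a) ≃ₗ[A] ↥(N b))

/-- The setoid identifying isomorphic modules (among those with property `P`). -/
def isoSetoid (A : Type) [Ring A] (P : ModuleCat.{0} A → Prop) :
    Setoid {M : ModuleCat.{0} A // P M} where
  r M N := Nonempty (↥M.1 ≃ₗ[A] ↥N.1)
  iseqv := ⟨fun M => ⟨LinearEquiv.refl A ↥M.1⟩, fun ⟨e⟩ => ⟨e.symm⟩,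
    fun ⟨e⟩ ⟨f⟩ => ⟨e.trans f⟩⟩

/-- The data exhibiting a ring `R` as a basic left Harada algebra:
a complete set `{e i j}` of orthogonal primitive idempotents with pairwise non-isomorphic
right ideals `(e i j)R` (`R` is basic), such that each `(e i 0)R` is an injective right
module, and `(e i j)R ≅ rad ((e i (j-1))R)` for `j ≥ 1`.  (Indices are shifted by one from
the paper: the paper's `e_{ij}` is `e i (j-1)` here.) -/
structure HaradaData (R : Type) [Ring R] : Type where
  m : ℕ
  hm : 0 < m
  n : Fin m → ℕ
  hn : ∀ i, 0 < n i
  e : (i : Fin m) → Fin (n i) → R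
  idem : ∀ i j, IsIdempotentElem (e i j)
  orth : ∀ p q : Σ i : Fin m, Fin (n i), p ≠ q → e p.1 p.2 * e q.1 q.2 = 0
  sum_eq_one : ∑ p : Σ i : Fin m, Fin (n i), e p.1 p.2 = 1
  indec : ∀ i j, IsIndecomposableMod Rᵐᵒᵖ ↥(rightIdeal R (e i j))
  basic : ∀ p q : Σ i : Fin m, Fin (n i), p ≠ q →
    IsEmpty (↥(rightIdeal R (e p.1 p.2)) ≃ₗ[Rᵐᵒᵖ] ↥(rightIdeal R (e q.1 q.2)))
  inj : ∀ i, Module.Injective Rᵐᵒᵖ ↥(rightIdeal R (e i ⟨0, hn i⟩))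
  rad_iso : ∀ (i : Fin m) (j : Fin (n i)), 0 < j.val →
    Nonempty (↥(rightIdeal R (e i j)) ≃ₗ[Rᵐᵒᵖ]
      ↥(radSub (rightIdeal R (e i ⟨j.val - 1, Nat.lt_of_le_of_lt (Nat.sub_le j.val 1) j.isLt⟩))))

variable {R : Type} [Ring R]

/-- `H.P i j = rad^j ((e i 0)R)`; this is the paper's `P_{i,j+1} = rad^j (e_{i1}R)`,
a submodule of `R`. -/
def HaradaData.P (H : HaradaData R) (i : Fin H.m) (j : Fin (H.n i)) : Submodule Rᵐᵒᵖ R :=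
  radSub^[j.val] (rightIdeal R (H.e i ⟨0, H.hn i⟩))

/-- The quotient module `P_{ik}/P_{il}` (for `l ≥ k` we have `H.P i l ≤ H.P i k`). -/
abbrev HaradaData.Quot (H : HaradaData R) (i : Fin H.m) (k l : Fin (H.n i)) : Type :=
  ↥(H.P i k) ⧸ Submodule.comap (H.P i k).subtype (H.P i l)

/-- The last index (the paper's `n_i`) in `Fin (H.n i)`. -/
def HaradaData.last (H : HaradaData R) (i : Fin H.m) : Fin (H.n i) :=
  ⟨H.n i - 1, Nat.sub_lt (H.hn i) one_pos⟩

/-- The right ideal `I = ⊕_{i,j} rad^{n_i - j + 1}(e_{ij}R)` of the paper. -/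
def HaradaData.I (H : HaradaData R) : Submodule Rᵐᵒᵖ R :=
  ⨆ p : Σ i : Fin H.m, Fin (H.n i),
    radSub^[H.n p.1 - p.2.val] (rightIdeal R (H.e p.1 p.2))

/-- The submodule `T·I` of a right module `T`, for `I` a right ideal of `R`. -/
def smulSub (I : Submodule Rᵐᵒᵖ R) (T : Type) [AddCommGroup T] [Module Rᵐᵒᵖ T] :
    Submodule Rᵐᵒᵖ T :=
  Submodule.span Rᵐᵒᵖ {x : T | ∃ (t : T) (r : R), r ∈ I ∧ x = op r • t}

/-- Restriction of scalars along `π : R →+* S`, turning a right `S`-module into a right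
`R`-module (type synonym). -/
@[nolint unusedArguments]
def RestrictRight {R S : Type} [Ring R] [Ring S] (_ : R →+* S) (N : Type) [AddCommGroup N]
    [Module Sᵐᵒᵖ N] : Type := N

instance {R S : Type} [Ring R] [Ring S] (π : R →+* S) (N : Type) [AddCommGroup N]
    [Module Sᵐᵒᵖ N] : AddCommGroup (RestrictRight π N) := inferInstanceAs (AddCommGroup N)

instance {R S : Type} [Ring R] [Ring S] (π : R →+* S) (N : Type) [AddCommGroup N]
    [Module Sᵐᵒᵖ N] : Module Rᵐᵒᵖ (RestrictRight π N) := Module.compHom N (RingHom.op π)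

/-! ### Generalities on radicals -/

theorem radSub_eq {A M : Type} [Ring A] [AddCommGroup M] [Module A M] (N : Submodule A M) :
    radSub N = Submodule.map N.subtype (Module.jacobson A ↥N) := rfl

theorem radSub_le {A M : Type} [Ring A] [AddCommGroup M] [Module A M] (N : Submodule A M) :
    radSub N ≤ N := by
  rw [radSub_eq]
  exact Submodule.map_subtype_le _ _

theorem radSub_iter_le {A M : Type} [Ring A] [AddCommGroup M] [Module A M] (N : Submodule A M)
    (k : ℕ) : radSub^[k] N ≤ N := by
  induction k with
  | zero => exact le_rfl
  | succ k ih =>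
    rw [Function.iterate_succ_apply']
    exact (radSub_le _).trans ih

theorem radSub_iter_anti {A M : Type} [Ring A] [AddCommGroup M] [Module A M] (N : Submodule A M)
    {k l : ℕ} (h : k ≤ l) : radSub^[l] N ≤ radSub^[k] N := by
  obtain ⟨d, rfl⟩ := Nat.exists_eq_add_of_le h
  rw [Nat.add_comm, Function.iterate_add_apply]
  exact radSub_iter_le _ _

theorem radSub_map {A M M' : Type} [Ring A] [AddCommGroup M] [Module A M] [AddCommGroup M']
    [Module A M'] (f : M →ₗ[A] M') (hf : Function.Injective f) (N : Submodule A M) :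
    radSub (N.map f) = (radSub N).map f := by
  rw [radSub_eq, radSub_eq]
  let g := Submodule.equivMapOfInjective f hf N
  have h1 : Submodule.map (g : ↥N →ₗ[A] ↥(N.map f)) (Module.jacobson A ↥N)
      = Module.jacobson A ↥(N.map f) := Module.map_jacobson_of_bijective g.bijective
  rw [← h1, ← Submodule.map_comp, ← Submodule.map_comp]
  rfl

theorem radSub_iter_map {A M M' : Type} [Ring A] [AddCommGroup M] [Module A M] [AddCommGroup M']
    [Module A M'] (f : M →ₗ[A] M') (hf : Function.Injective f) (N : Submodule A M) (k : ℕ) :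
    radSub^[k] (N.map f) = (radSub^[k] N).map f := by
  induction k with
  | zero => rfl
  | succ k ih => rw [Function.iterate_succ_apply', Function.iterate_succ_apply', ih, radSub_map f hf]

/-- Iterated radical of a module. -/
def rk (A M : Type) [Ring A] [AddCommGroup M] [Module A M] (k : ℕ) : Submodule A M :=
  radSub^[k] ⊤

theorem rk_succ (A M : Type) [Ring A] [AddCommGroup M] [Module A M] (k : ℕ) :
    rk A M (k+1) = radSub (rk A M k) := Function.iterate_succ_apply' _ _ _

theorem rk_range {A M M' : Type} [Ring A] [AddCommGroup M] [Module A M] [AddCommGroup M']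
    [Module A M'] (f : M →ₗ[A] M') (hf : Function.Injective f) (k : ℕ) :
    radSub^[k] (LinearMap.range f) = (rk A M k).map f := by
  rw [LinearMap.range_eq_map, radSub_iter_map f hf]; rfl

theorem rk_sub {A M : Type} [Ring A] [AddCommGroup M] [Module A M] (N : Submodule A M) (k : ℕ) :
    radSub^[k] N = (rk A ↥N k).map N.subtype := by
  rw [← rk_range N.subtype N.injective_subtype, Submodule.range_subtype]

theorem rk_one {A M : Type} [Ring A] [AddCommGroup M] [Module A M] :
    rk A M 1 = Module.jacobson A M := by
  have h := radSub_eq (⊤ : Submodule A M)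
  have h1 : Submodule.map ((Submodule.topEquiv : ↥(⊤ : Submodule A M) ≃ₗ[A] M) :
      ↥(⊤ : Submodule A M) →ₗ[A] M) (Module.jacobson A ↥(⊤ : Submodule A M))
      = Module.jacobson A M := Module.map_jacobson_of_bijective Submodule.topEquiv.bijective
  rw [← h1]
  exact h

/-- Indecomposable projective modules of finite length are local. -/
theorem indec_local {A M : Type} [Ring A] [AddCommGroup M] [Module A M]
    [IsArtinian A M] [IsNoetherian A M] [Module.Projective A M] (h : IsIndecomposableMod A M)
    (B : Submodule A M) (hB : B ≠ ⊤) : B ≤ rk A M 1 := by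
  rw [rk_one]
  refine le_sInf fun N hN => ?_
  by_contra hBN
  apply hB
  have hN : IsCoatom N := hN
  have hsup : N ⊔ B = ⊤ := hN.2 _ (lt_of_le_of_ne le_sup_left fun hh => hBN (by
    rw [hh]; exact le_sup_right))
  have hs : Function.Surjective (N.mkQ ∘ₗ B.subtype) := by
    rw [← LinearMap.range_eq_top, LinearMap.range_comp, Submodule.range_subtype]
    have : Submodule.map N.mkQ (N ⊔ B) = ⊤ := by
      rw [hsup, Submodule.map_top, Submodule.range_mkQ]
    rw [Submodule.map_sup] at this
    simpa using this
  obtain ⟨g, hg⟩ := Module.projective_lifting_property _ N.mkQ hs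
  let u : Module.End A M := B.subtype ∘ₗ g
  have hu : ∀ x, N.mkQ (u x) = N.mkQ x := fun x => LinearMap.congr_fun hg x
  have hun : ∀ (k : ℕ) x, N.mkQ ((u^k) x) = N.mkQ x := by
    intro k
    induction k with
    | zero => intro x; simp
    | succ k ih => intro x; rw [pow_succ, Module.End.mul_apply, ih, hu]
  obtain ⟨k, hk⟩ := Filter.eventually_atTop.1 (LinearMap.eventually_isCompl_ker_pow_range_pow u)
  have hk := hk (k+1) (Nat.le_succ k)
  rcases h.2 _ _ hk with h0 | h0
  · have hinj : Function.Injective u := by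
      rw [← LinearMap.ker_eq_bot, eq_bot_iff, ← h0, pow_succ]
      intro x hx
      rw [LinearMap.mem_ker] at hx ⊢
      rw [Module.End.mul_apply, hx, map_zero]
    have hsurj := IsArtinian.surjective_of_injective_endomorphism u hinj
    rw [eq_top_iff]
    intro x _
    obtain ⟨y, rfl⟩ := hsurj x
    exact (g y).2
  · exfalso
    apply hN.1
    rw [eq_top_iff]
    intro x _
    have h1 := hun (k+1) x
    have h2 : (u^(k+1)) x = 0 := by
      have : (u^(k+1)) x ∈ LinearMap.range (u^(k+1)) := ⟨x, rfl⟩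
      rw [h0] at this
      simpa using this
    rw [h2, map_zero] at h1
    simpa using h1.symm

theorem indec_rad_ne {A M : Type} [Ring A] [AddCommGroup M] [Module A M]
    [IsNoetherian A M] (h : IsIndecomposableMod A M) : rk A M 1 ≠ ⊤ := by
  have := h.1
  rw [rk_one]
  exact (Module.jacobson_lt_top A M).ne

/-- Schanuel: independence of the projectivity of the kernel from the presentation. -/
theorem PdLeOne.ker_projective {A T Q : Type} [Ring A] [AddCommGroup T] [Module A T]
    [AddCommGroup Q] [Module A Q] [Module.Projective A Q] (h : PdLeOne A T)
    (g : Q →ₗ[A] T) (hg : Function.Surjective g) : Module.Projective A ↥(LinearMap.ker g) := by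
  obtain ⟨P, f, hP, hf, hk⟩ := h
  obtain ⟨a, ha⟩ := Module.projective_lifting_property f g hf
  obtain ⟨b, hb⟩ := Module.projective_lifting_property g f hg
  have ha : ∀ x, f (a x) = g x := LinearMap.congr_fun ha
  have hb : ∀ x, g (b x) = f x := LinearMap.congr_fun hb
  let s1 : ↥(LinearMap.ker g) →ₗ[A] ↥(LinearMap.ker f) :=
    LinearMap.codRestrict _ (a ∘ₗ (LinearMap.ker g).subtype) (fun x => by
      rw [LinearMap.mem_ker]
      exact (ha _).trans x.2)
  let s : ↥(LinearMap.ker g) →ₗ[A] ↥(LinearMap.ker f) × Q := s1.prod (LinearMap.ker g).subtype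
  let r : ↥(LinearMap.ker f) × Q →ₗ[A] ↥(LinearMap.ker g) :=
    LinearMap.codRestrict _
      (((b ∘ₗ (LinearMap.ker f).subtype).coprod (LinearMap.id - b ∘ₗ a))) (fun x => by
      have : f x.1 = 0 := x.1.2
      rw [LinearMap.mem_ker]
      simp [ha, hb, this])
  refine Module.Projective.of_split s r ?_
  ext x
  simp [s, r, s1]

/-! ### The submodule `T·I` -/

theorem smulSub_mem (I : Submodule Rᵐᵒᵖ R) {T : Type} [AddCommGroup T] [Module Rᵐᵒᵖ T]
    (t : T) {r : R} (hr : r ∈ I) : op r • t ∈ smulSub I T :=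
  Submodule.subset_span ⟨t, r, hr, rfl⟩

theorem smulSub_map_le (I : Submodule Rᵐᵒᵖ R) {T T' : Type} [AddCommGroup T] [Module Rᵐᵒᵖ T]
    [AddCommGroup T'] [Module Rᵐᵒᵖ T'] (f : T →ₗ[Rᵐᵒᵖ] T') :
    (smulSub I T).map f ≤ smulSub I T' := by
  rw [Submodule.map_le_iff_le_comap]
  refine Submodule.span_le.2 ?_
  rintro x ⟨t, r, hr, rfl⟩
  simp only [Submodule.comap_coe, Set.mem_preimage, map_smul, SetLike.mem_coe]
  exact smulSub_mem I _ hr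

theorem smulSub_map_eq (I : Submodule Rᵐᵒᵖ R) {T T' : Type} [AddCommGroup T] [Module Rᵐᵒᵖ T]
    [AddCommGroup T'] [Module Rᵐᵒᵖ T'] (f : T →ₗ[Rᵐᵒᵖ] T') (hf : Function.Surjective f) :
    (smulSub I T).map f = smulSub I T' := by
  refine le_antisymm (smulSub_map_le I f) (Submodule.span_le.2 ?_)
  rintro x ⟨t, r, hr, rfl⟩
  obtain ⟨s, rfl⟩ := hf t
  exact ⟨op r • s, smulSub_mem I _ hr, map_smul _ _ _⟩

/-- Nakayama. -/
theorem smulSub_nakayama (I : Submodule Rᵐᵒᵖ R) (hI : I ≤ Module.jacobson Rᵐᵒᵖ R)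
    {T : Type} [AddCommGroup T] [Module Rᵐᵒᵖ T] [Module.Finite Rᵐᵒᵖ T]
    (N : Submodule Rᵐᵒᵖ T) (h : N ⊔ smulSub I T = ⊤) : N = ⊤ := by
  by_contra hN
  obtain ⟨M, hM, hNM⟩ := (eq_top_or_exists_le_coatom N).resolve_left hN
  apply hM.1
  rw [eq_top_iff, ← h]
  refine sup_le hNM (Submodule.span_le.2 ?_)
  rintro x ⟨t, r, hr, rfl⟩
  let f : R →ₗ[Rᵐᵒᵖ] T :=
    { toFun := fun x => op x • t
      map_add' := fun x y => by rw [op_add, add_smul]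
      map_smul' := fun a x => by
        simp [← mul_smul] }
  have h1 : r ∈ Submodule.comap f (Module.jacobson Rᵐᵒᵖ T) :=
    Module.le_comap_jacobson f (hI hr)
  exact (sInf_le (show M ∈ {P : Submodule Rᵐᵒᵖ T | IsCoatom P} from hM)) h1

/-- Submodules containing `X·I` are of the form `Q + X·I` with `Q` projective. -/
def Good (I : Submodule Rᵐᵒᵖ R) (X : Type) [AddCommGroup X] [Module Rᵐᵒᵖ X] : Prop :=
  ∀ L : Submodule Rᵐᵒᵖ X, smulSub I X ≤ L →
    ∃ Q : Submodule Rᵐᵒᵖ X, Module.Projective Rᵐᵒᵖ ↥Q ∧ Q ⊔ smulSub I X = L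

theorem Good.equiv {I : Submodule Rᵐᵒᵖ R} {X Y : Type} [AddCommGroup X] [Module Rᵐᵒᵖ X]
    [AddCommGroup Y] [Module Rᵐᵒᵖ Y] (h : Good I X) (e : X ≃ₗ[Rᵐᵒᵖ] Y) : Good I Y := by
  intro L hL
  have hs := smulSub_map_eq I (e : X →ₗ[Rᵐᵒᵖ] Y) e.surjective
  obtain ⟨Q, hQ, hQL⟩ := h (L.comap (e : X →ₗ[Rᵐᵒᵖ] Y)) (by
    rw [← Submodule.map_le_iff_le_comap, hs]; exact hL)
  refine ⟨Q.map (e : X →ₗ[Rᵐᵒᵖ] Y), ?_, ?_⟩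
  · exact Module.Projective.of_equiv (e.submoduleMap Q)
  · rw [← hs, ← Submodule.map_sup, hQL]
    exact Submodule.map_comap_eq_of_surjective e.surjective L

theorem Good.of_subsingleton {I : Submodule Rᵐᵒᵖ R} {X : Type} [AddCommGroup X] [Module Rᵐᵒᵖ X]
    [Subsingleton X] : Good I X := by
  intro L hL
  exact ⟨⊥, inferInstance, Subsingleton.elim _ _⟩

theorem Good.prod {I : Submodule Rᵐᵒᵖ R} {X Y : Type} [AddCommGroup X] [Module Rᵐᵒᵖ X]
    [AddCommGroup Y] [Module Rᵐᵒᵖ Y] (hX : Good I X) (hY : Good I Y) : Good I (X × Y) := by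
  intro L hL
  have sX := (smulSub_map_le I (LinearMap.inl Rᵐᵒᵖ X Y))
  have sY := (smulSub_map_le I (LinearMap.inr Rᵐᵒᵖ X Y))
  have sY' := (smulSub_map_eq I (LinearMap.snd Rᵐᵒᵖ X Y) Prod.snd_surjective)
  obtain ⟨QX, pX, eX⟩ := hX (L.comap (LinearMap.inl Rᵐᵒᵖ X Y)) (by
    rw [← Submodule.map_le_iff_le_comap]; exact sX.trans hL)
  obtain ⟨QY, pY, eY⟩ := hY (L.map (LinearMap.snd Rᵐᵒᵖ X Y)) (by
    rw [← sY']; exact Submodule.map_mono hL)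
  have hle : QY ≤ L.map (LinearMap.snd Rᵐᵒᵖ X Y) := eY ▸ le_sup_left
  have hsub : Function.Surjective ((LinearMap.snd Rᵐᵒᵖ X Y).submoduleMap L) :=
    LinearMap.submoduleMap_surjective _ _
  obtain ⟨s, hs⟩ := Module.projective_lifting_property _ (Submodule.inclusion hle) hsub
  have hs : ∀ y : ↥QY, ((s y : X × Y)).2 = (y : Y) := fun y =>
    congrArg Subtype.val (LinearMap.congr_fun hs y)
  let F : ↥QX × ↥QY →ₗ[Rᵐᵒᵖ] X × Y :=
    (LinearMap.inl Rᵐᵒᵖ X Y ∘ₗ QX.subtype).coprod (L.subtype ∘ₗ s)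
  have hF : ∀ a b, F (a, b) = ((a : X), (0 : Y)) + (s b : X × Y) := fun a b => by
    simp [F]
  have hFinj : Function.Injective F := by
    rw [← LinearMap.ker_eq_bot, eq_bot_iff]
    rintro ⟨a, b⟩ hab
    rw [LinearMap.mem_ker, hF] at hab
    have h2 := congrArg Prod.snd hab
    simp only [Prod.snd_add, zero_add, Prod.snd_zero, hs] at h2
    have hb : b = 0 := Subtype.ext h2
    subst hb
    have h1 := congrArg Prod.fst hab
    simp only [map_zero, Submodule.coe_zero, add_zero, Prod.fst_zero] at h1
    have ha : a = 0 := Subtype.ext h1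
    subst ha
    simp
  refine ⟨LinearMap.range F, Module.Projective.of_equiv (LinearEquiv.ofInjective F hFinj), ?_⟩
  apply le_antisymm
  · refine sup_le ?_ hL
    rintro _ ⟨⟨a, b⟩, rfl⟩
    rw [hF]
    refine L.add_mem ?_ (s b).2
    have : (a : X) ∈ L.comap (LinearMap.inl Rᵐᵒᵖ X Y) := by
      rw [← eX]; exact Submodule.mem_sup_left a.2
    exact this
  · rintro ⟨x, y⟩ hxy
    have hy : y ∈ QY ⊔ smulSub I Y := by
      rw [eY]; exact ⟨(x, y), hxy, rfl⟩
    obtain ⟨q, hq, z, hz, rfl⟩ := Submodule.mem_sup.1 hy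
    have hz' : ((0 : X), z) ∈ smulSub I (X × Y) := sY ⟨z, hz, rfl⟩
    have hx : x - (s ⟨q, hq⟩ : X × Y).1 ∈ QX ⊔ smulSub I X := by
      rw [eX]
      have h1 := L.sub_mem (L.sub_mem hxy (s ⟨q, hq⟩).2) (hL hz')
      have h2 : ((x, q + z) - (s ⟨q, hq⟩ : X × Y) - ((0 : X), z))
          = (x - (s ⟨q, hq⟩ : X × Y).1, (0 : Y)) := by
        ext
        · simp
        · simp [hs]
      rw [h2] at h1
      exact h1
    obtain ⟨a, ha, w, hw, haw⟩ := Submodule.mem_sup.1 hx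
    have hw' : (w, (0 : Y)) ∈ smulSub I (X × Y) := sX ⟨w, hw, rfl⟩
    have : ((x, q + z) : X × Y) = F (⟨a, ha⟩, ⟨q, hq⟩) + ((w, (0 : Y)) + ((0 : X), z)) := by
      rw [hF]
      have : x = a + w + (s ⟨q, hq⟩ : X × Y).1 := by rw [haw]; abel
      ext
      · simp [this]; abel
      · simp [hs]
    rw [this]
    exact Submodule.add_mem_sup ⟨_, rfl⟩ (Submodule.add_mem _ hw' hz')

theorem Good.pi_fin {I : Submodule Rᵐᵒᵖ R} : ∀ (k : ℕ) (X : Fin k → Type)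
    [∀ a, AddCommGroup (X a)] [∀ a, Module Rᵐᵒᵖ (X a)], (∀ a, Good I (X a)) →
    Good I (∀ a, X a)
  | 0, _, _, _, _ => Good.of_subsingleton
  | k+1, X, _, _, h =>
    ((h 0).prod (Good.pi_fin k (fun a => X a.succ) fun a => h a.succ)).equiv
      (Fin.consLinearEquiv Rᵐᵒᵖ X)

theorem Good.pi {I : Submodule Rᵐᵒᵖ R} {ι : Type} [Fintype ι] (X : ι → Type)
    [∀ a, AddCommGroup (X a)] [∀ a, Module Rᵐᵒᵖ (X a)] (h : ∀ a, Good I (X a)) :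
    Good I (∀ a, X a) :=
  (Good.pi_fin _ (fun a => X ((Fintype.equivFin ι).symm a)) fun _ => h _).equiv
    (LinearEquiv.piCongrLeft Rᵐᵒᵖ X (Fintype.equivFin ι).symm)

/-- The regular right module is isomorphic to the regular left module over the opposite ring. -/
def opREquiv (R : Type) [Ring R] : R ≃ₗ[Rᵐᵒᵖ] Rᵐᵒᵖ where
  toFun := op
  invFun := unop
  left_inv _ := rfl
  right_inv _ := rfl
  map_add' _ _ := rfl
  map_smul' _ _ := rfl

/-- The map `R → T`, `x ↦ t x`. -/
def elemMap {T : Type} [AddCommGroup T] [Module Rᵐᵒᵖ T] (t : T) : R →ₗ[Rᵐᵒᵖ] T where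
  toFun := fun x => op x • t
  map_add' := fun x y => by rw [op_add, add_smul]
  map_smul' := fun a x => by simp [← mul_smul]

theorem elemMap_apply {T : Type} [AddCommGroup T] [Module Rᵐᵒᵖ T] (t : T) (x : R) :
    elemMap t x = op x • t := rfl

theorem exists_fin_R {T : Type} [AddCommGroup T] [Module Rᵐᵒᵖ T] [Module.Finite Rᵐᵒᵖ T] :
    ∃ (k : ℕ) (f : (Fin k → R) →ₗ[Rᵐᵒᵖ] T), Function.Surjective f := by
  obtain ⟨k, f, hf⟩ := Module.Finite.exists_fin' Rᵐᵒᵖ T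
  let e : (Fin k → R) ≃ₗ[Rᵐᵒᵖ] (Fin k → Rᵐᵒᵖ) := LinearEquiv.piCongrRight fun _ => opREquiv R
  exact ⟨k, f ∘ₗ e, hf.comp e.surjective⟩

instance projR : Module.Projective Rᵐᵒᵖ R := Module.Projective.of_equiv (opREquiv R).symm

instance finR : Module.Finite Rᵐᵒᵖ R := Module.Finite.equiv (opREquiv R).symm

theorem proj_pi {A ι : Type} [Ring A] [Fintype ι] (X : ι → Type) [∀ a, AddCommGroup (X a)]
    [∀ a, Module A (X a)] (h : ∀ a, Module.Projective A (X a)) :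
    Module.Projective A (∀ a, X a) := by
  classical
  exact Module.Projective.of_equiv (DFinsupp.linearEquivFunOnFintype (R := A) (M := X))

instance projRfin (k : ℕ) : Module.Projective Rᵐᵒᵖ (Fin k → R) :=
  proj_pi _ fun _ => inferInstance

/-- Data: an injective module `E` containing `R`, through which maps to `I` extend. -/
def ExtProp (I : Submodule Rᵐᵒᵖ R) (E : Type) [AddCommGroup E] [Module Rᵐᵒᵖ E]
    (ι : R →ₗ[Rᵐᵒᵖ] E) : Prop :=
  ∀ r ∈ I, ∃ m : E →ₗ[Rᵐᵒᵖ] R, (∀ x, m x ∈ I) ∧ m (ι 1) = r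

theorem ExtProp.smulSub {I : Submodule Rᵐᵒᵖ R} {E : Type} [AddCommGroup E] [Module Rᵐᵒᵖ E]
    {ι : R →ₗ[Rᵐᵒᵖ] E} (h : ExtProp I E ι) {T : Type} [AddCommGroup T] [Module Rᵐᵒᵖ T]
    (f : R →ₗ[Rᵐᵒᵖ] ↥(smulSub I T)) :
    ∃ m : E →ₗ[Rᵐᵒᵖ] ↥(_root_.smulSub I T), ∀ x, m (ι x) = f x := by
  have key : ∀ w ∈ _root_.smulSub I T, ∀ a : Rᵐᵒᵖ, ∃ m : E →ₗ[Rᵐᵒᵖ] T,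
      (∀ x, m x ∈ _root_.smulSub I T) ∧ m (ι 1) = a • w := by
    intro w hw
    induction hw using Submodule.span_induction with
    | mem w hw =>
      obtain ⟨t, r, hr, rfl⟩ := hw
      intro a
      obtain ⟨m, hm, hm1⟩ := h _ (I.smul_mem a hr)
      refine ⟨elemMap t ∘ₗ m, fun x => smulSub_mem I t (hm x), ?_⟩
      rw [LinearMap.comp_apply, hm1, map_smul, elemMap_apply]
    | zero => exact fun a => ⟨0, fun x => Submodule.zero_mem _, by simp⟩
    | add x y _ _ hx hy =>
      intro a
      obtain ⟨m, hm, hm1⟩ := hx a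
      obtain ⟨m', hm', hm1'⟩ := hy a
      exact ⟨m + m', fun x => Submodule.add_mem _ (hm x) (hm' x), by simp [hm1, hm1']⟩
    | smul b x _ hx =>
      intro a
      obtain ⟨m, hm, hm1⟩ := hx (a * b)
      exact ⟨m, hm, by rw [hm1, mul_smul]⟩
  obtain ⟨m, hm, hm1⟩ := key _ (f 1).2 1
  refine ⟨LinearMap.codRestrict _ m hm, fun x => ?_⟩
  have hx : x = op x • (1 : R) := by simp
  rw [hx, map_smul, map_smul, map_smul]
  congr 1
  apply Subtype.ext
  rw [LinearMap.codRestrict_apply, hm1, one_smul]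

/-- Vanishing of `Ext¹(T, T'·I)`, as a lifting property. -/
theorem ExtProp.lift {I : Submodule Rᵐᵒᵖ R} {E : Type} [AddCommGroup E] [Module Rᵐᵒᵖ E]
    {ι : R →ₗ[Rᵐᵒᵖ] E} (h : ExtProp I E ι) [Module.Injective Rᵐᵒᵖ E] [IsNoetherianRing Rᵐᵒᵖ]
    {T T' : Type} [AddCommGroup T] [Module Rᵐᵒᵖ T]
    [AddCommGroup T'] [Module Rᵐᵒᵖ T'] [Module.Finite Rᵐᵒᵖ T] (hT : PdLeOne Rᵐᵒᵖ T)
    (v : T →ₗ[Rᵐᵒᵖ] T' ⧸ _root_.smulSub I T') :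
    ∃ u : T →ₗ[Rᵐᵒᵖ] T', (_root_.smulSub I T').mkQ ∘ₗ u = v := by
  obtain ⟨k, f, hf⟩ := exists_fin_R (R := R) (T := T)
  have hP := hT.ker_projective f hf
  have hfin : Module.Finite Rᵐᵒᵖ ↥(LinearMap.ker f) := inferInstance
  obtain ⟨g, hg⟩ := Module.projective_lifting_property (_root_.smulSub I T').mkQ (v ∘ₗ f)
    (Submodule.mkQ_surjective _)
  have hg : ∀ x, (_root_.smulSub I T').mkQ (g x) = v (f x) := LinearMap.congr_fun hg
  let h0 : ↥(LinearMap.ker f) →ₗ[Rᵐᵒᵖ] ↥(_root_.smulSub I T') :=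
    LinearMap.codRestrict _ (g ∘ₗ (LinearMap.ker f).subtype) (fun x => by
      have h1 := hg x
      rw [LinearMap.mem_ker.1 x.2, map_zero] at h1
      exact (Submodule.Quotient.mk_eq_zero _).1 h1)
  obtain ⟨l, c, hc⟩ := exists_fin_R (R := R) (T := ↥(LinearMap.ker f))
  obtain ⟨s, hs⟩ := Module.projective_lifting_property c LinearMap.id hc
  have hs : ∀ x, c (s x) = x := LinearMap.congr_fun hs
  have hm := fun a : Fin l => h.smulSub (h0 ∘ₗ c ∘ₗ LinearMap.single Rᵐᵒᵖ (fun _ => R) a)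
  choose m hm using hm
  let M : (Fin l → E) →ₗ[Rᵐᵒᵖ] ↥(_root_.smulSub I T') :=
    ∑ a, m a ∘ₗ LinearMap.proj a
  let ιl : (Fin l → R) →ₗ[Rᵐᵒᵖ] (Fin l → E) := LinearMap.pi fun a => ι ∘ₗ LinearMap.proj a
  have hM : ∀ x, M (ιl x) = h0 (c x) := by
    intro x
    have h1 : x = ∑ a, LinearMap.single Rᵐᵒᵖ (fun _ : Fin l => R) a (x a) :=
      (Finset.univ_sum_single x).symm
    conv_rhs => rw [h1, map_sum, map_sum]
    simp only [M, LinearMap.sum_apply]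
    refine Finset.sum_congr rfl fun a _ => ?_
    exact hm a (x a)
  obtain ⟨r, hr⟩ := Module.Injective.out (R := Rᵐᵒᵖ) (Q := Fin l → E)
    (LinearMap.ker f).subtype (Submodule.injective_subtype _) (ιl ∘ₗ s)
  let g' := g - (_root_.smulSub I T').subtype ∘ₗ M ∘ₗ r
  have hg' : LinearMap.ker f ≤ LinearMap.ker g' := by
    intro x hx
    rw [LinearMap.mem_ker]
    have h1 : M (r x) = h0 ⟨x, hx⟩ := by
      have h2 := hr ⟨x, hx⟩
      rw [Submodule.subtype_apply] at h2
      rw [h2, LinearMap.comp_apply, hM, hs]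
    simp only [g', LinearMap.sub_apply, LinearMap.comp_apply, h1]
    simp [h0]
  let q := f.quotKerEquivOfSurjective hf
  have hq : ∀ x, q.symm (f x) = (LinearMap.ker f).mkQ x := fun x => by
    rw [LinearEquiv.symm_apply_eq]; rfl
  refine ⟨((LinearMap.ker f).liftQ g' hg') ∘ₗ q.symm, ?_⟩
  ext t
  obtain ⟨x, rfl⟩ := hf t
  rw [LinearMap.comp_apply, LinearMap.comp_apply, LinearEquiv.coe_coe, hq]
  change (_root_.smulSub I T').mkQ (g' x) = v (f x)
  rw [← hg]
  simp [g']

theorem ExtProp.iso {I : Submodule Rᵐᵒᵖ R} {E : Type} [AddCommGroup E] [Module Rᵐᵒᵖ E]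
    {ι : R →ₗ[Rᵐᵒᵖ] E} (h : ExtProp I E ι) [Module.Injective Rᵐᵒᵖ E] [IsNoetherianRing Rᵐᵒᵖ]
    (hI : I ≤ Module.jacobson Rᵐᵒᵖ R)
    {T T' : Type} [AddCommGroup T] [Module Rᵐᵒᵖ T]
    [AddCommGroup T'] [Module Rᵐᵒᵖ T'] [Module.Finite Rᵐᵒᵖ T] [Module.Finite Rᵐᵒᵖ T']
    (hT : PdLeOne Rᵐᵒᵖ T) (hT' : PdLeOne Rᵐᵒᵖ T')
    (e : (T ⧸ _root_.smulSub I T) ≃ₗ[Rᵐᵒᵖ] (T' ⧸ _root_.smulSub I T')) :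
    Nonempty (T ≃ₗ[Rᵐᵒᵖ] T') := by
  have surj : ∀ {X Y : Type} [AddCommGroup X] [Module Rᵐᵒᵖ X]
    [AddCommGroup Y] [Module Rᵐᵒᵖ Y] [Module.Finite Rᵐᵒᵖ Y] (w : X →ₗ[Rᵐᵒᵖ] Y),
    Function.Surjective ((_root_.smulSub I Y).mkQ ∘ₗ w) → Function.Surjective w := by
    intro X Y _ _ _ _ _ w hw
    rw [← LinearMap.range_eq_top]
    apply smulSub_nakayama I hI
    rw [eq_top_iff]
    intro y _
    obtain ⟨x, hx⟩ := hw ((_root_.smulSub I Y).mkQ y)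
    have h1 : y - w x ∈ _root_.smulSub I Y := by
      rw [← Submodule.ker_mkQ (_root_.smulSub I Y), LinearMap.mem_ker, map_sub, ← hx]
      simp
    have h2 : y = w x + (y - w x) := by abel
    rw [h2]
    exact Submodule.add_mem_sup ⟨x, rfl⟩ h1
  obtain ⟨u, hu⟩ := h.lift hT (e.toLinearMap ∘ₗ (_root_.smulSub I T).mkQ)
  obtain ⟨w, hw⟩ := h.lift hT' (e.symm.toLinearMap ∘ₗ (_root_.smulSub I T').mkQ)
  have hus : Function.Surjective u := surj u (by
    rw [hu]; exact e.surjective.comp (Submodule.mkQ_surjective _))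
  have hws : Function.Surjective w := surj w (by
    rw [hw]; exact e.symm.surjective.comp (Submodule.mkQ_surjective _))
  have hinj : Function.Injective (w ∘ₗ u) :=
    IsNoetherian.injective_of_surjective_endomorphism _ (hws.comp hus)
  have hui : Function.Injective u := Function.Injective.of_comp (f := w) hinj
  exact ⟨LinearEquiv.ofBijective u ⟨hui, hus⟩⟩

/-- Density. -/
theorem Good.dense {I : Submodule Rᵐᵒᵖ R} {X : Type} [AddCommGroup X] [Module Rᵐᵒᵖ X]
    [Module.Projective Rᵐᵒᵖ X] (hX : Good I X) {N : Type} [AddCommGroup N] [Module Rᵐᵒᵖ N]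
    (hN : smulSub I N = ⊥) (f : X →ₗ[Rᵐᵒᵖ] N) (hf : Function.Surjective f) :
    ∃ Q : Submodule Rᵐᵒᵖ X, PdLeOne Rᵐᵒᵖ (X ⧸ Q) ∧
      Nonempty (N ≃ₗ[Rᵐᵒᵖ] ((X ⧸ Q) ⧸ smulSub I (X ⧸ Q))) := by
  obtain ⟨Q, hQ, hQL⟩ := hX (LinearMap.ker f) (by
    intro x hx
    have h1 := smulSub_map_le I f ⟨x, hx, rfl⟩
    rw [hN] at h1
    exact h1)
  refine ⟨Q, ⟨ModuleCat.of Rᵐᵒᵖ X, Q.mkQ, inferInstance, Submodule.mkQ_surjective _, ?_⟩, ?_⟩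
  · rw [Submodule.ker_mkQ]; exact hQ
  · let g := (smulSub I (X ⧸ Q)).mkQ ∘ₗ Q.mkQ
    have hg : Function.Surjective g :=
      (Submodule.mkQ_surjective _).comp (Submodule.mkQ_surjective _)
    have hk : LinearMap.ker f = LinearMap.ker g := by
      rw [LinearMap.ker_comp, Submodule.ker_mkQ,
        ← smulSub_map_eq I Q.mkQ (Submodule.mkQ_surjective _), Submodule.comap_map_mkQ, hQL]
    exact ⟨(f.quotKerEquivOfSurjective hf).symm ≪≫ₗ Submodule.quotEquivOfEq _ _ hk ≪≫ₗ
      g.quotKerEquivOfSurjective hg⟩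

/-! ### Harada algebras -/

/-- The indecomposable projective `(e i j)R`. -/
abbrev HaradaData.X (H : HaradaData R) (i : Fin H.m) (j : Fin (H.n i)) : Type :=
  ↥(rightIdeal R (H.e i j))

theorem mem_rightIdeal {e : R} (he : IsIdempotentElem e) (x : R) :
    x ∈ rightIdeal R e ↔ e * x = x := by
  rw [rightIdeal, Submodule.mem_span_singleton]
  constructor
  · rintro ⟨a, rfl⟩
    rw [← op_unop a, op_smul_eq_mul, ← mul_assoc, he.eq]
  · intro h
    exact ⟨op x, by rw [op_smul_eq_mul, h]⟩

/-- Left multiplication by `e`, onto `eR`. -/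
def toRight {e : R} (he : IsIdempotentElem e) : R →ₗ[Rᵐᵒᵖ] ↥(rightIdeal R e) where
  toFun x := ⟨e * x, (mem_rightIdeal he _).2 (by rw [← mul_assoc, he.eq])⟩
  map_add' x y := Subtype.ext (mul_add _ _ _)
  map_smul' a x := Subtype.ext (by
    rw [← op_unop a]
    simp [mul_assoc])

theorem toRight_coe {e : R} (he : IsIdempotentElem e) (x : R) :
    (toRight he x : R) = e * x := rfl

theorem rightIdeal_projective {e : R} (he : IsIdempotentElem e) :
    Module.Projective Rᵐᵒᵖ ↥(rightIdeal R e) := by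
  refine Module.Projective.of_split (rightIdeal R e).subtype (toRight he) ?_
  ext x
  exact (mem_rightIdeal he _).1 x.2

instance (H : HaradaData R) (i : Fin H.m) (j : Fin (H.n i)) :
    Module.Projective Rᵐᵒᵖ (H.X i j) := rightIdeal_projective (H.idem i j)

theorem HaradaData.step (H : HaradaData R) (i : Fin H.m) (a : ℕ) (h : a + 1 < H.n i) :
    ∃ g : H.X i ⟨a+1, h⟩ →ₗ[Rᵐᵒᵖ] H.X i ⟨a, Nat.lt_of_succ_lt h⟩,
      Function.Injective g ∧ LinearMap.range g = rk Rᵐᵒᵖ _ 1 := by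
  obtain ⟨e⟩ := H.rad_iso i ⟨a+1, h⟩ (Nat.succ_pos a)
  have e : H.X i ⟨a+1, h⟩ ≃ₗ[Rᵐᵒᵖ]
    ↥(radSub (rightIdeal R (H.e i ⟨a, Nat.lt_of_succ_lt h⟩))) := e
  have hle := radSub_le (rightIdeal R (H.e i ⟨a, Nat.lt_of_succ_lt h⟩))
  refine ⟨Submodule.inclusion hle ∘ₗ e.toLinearMap,
    (Submodule.inclusion_injective hle).comp e.injective, ?_⟩
  rw [LinearMap.range_comp_of_range_eq_top _ (LinearMap.range_eq_top.2 e.surjective),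
    Submodule.range_inclusion, radSub_eq, rk_one,
    Submodule.comap_map_eq_of_injective (Submodule.injective_subtype _)]

theorem HaradaData.embed (H : HaradaData R) (i : Fin H.m) (j : Fin (H.n i)) (k : ℕ)
    (h : j.val + k < H.n i) :
    ∃ f : H.X i ⟨j.val + k, h⟩ →ₗ[Rᵐᵒᵖ] H.X i j,
      Function.Injective f ∧ LinearMap.range f = rk Rᵐᵒᵖ _ k := by
  induction k with
  | zero => exact ⟨LinearMap.id, Function.injective_id, LinearMap.range_id⟩
  | succ k ih =>
    obtain ⟨f, hf, hfr⟩ := ih (by omega)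
    obtain ⟨g, hg, hgr⟩ := H.step i (j.val + k) h
    refine ⟨f ∘ₗ g, hf.comp hg, ?_⟩
    rw [LinearMap.range_comp, hgr, rk_succ, rk_succ, ← radSub_map f hf, ← hfr]
    congr 1
    exact (LinearMap.range_eq_map f).symm

theorem HaradaData.comp_le (H : HaradaData R) (i : Fin H.m) (j : Fin (H.n i)) (x : H.X i j)
    (hx : x ∈ rk Rᵐᵒᵖ (H.X i j) (H.n i - j.val)) : (x : R) ∈ H.I := by
  have h1 : radSub^[H.n i - j.val] (rightIdeal R (H.e i j)) ≤ H.I :=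
    le_iSup (fun p : Σ i : Fin H.m, Fin (H.n i) =>
      radSub^[H.n p.1 - p.2.val] (rightIdeal R (H.e p.1 p.2))) ⟨i, j⟩
  apply h1
  rw [rk_sub]
  exact ⟨x, hx, rfl⟩

theorem HaradaData.I_le_jac (H : HaradaData R) : H.I ≤ Module.jacobson Rᵐᵒᵖ R := by
  refine iSup_le fun p => ?_
  have h1 : 1 ≤ H.n p.1 - p.2.val := by have := p.2.2; omega
  refine (radSub_iter_anti _ h1).trans ?_
  rw [Function.iterate_one, radSub_eq]
  exact Module.map_jacobson_le _

section Art

variable [IsArtinianRing Rᵐᵒᵖ]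

theorem HaradaData.rk_dich (H : HaradaData R) (i : Fin H.m) (j : Fin (H.n i)) (k : ℕ)
    (h : j.val + k < H.n i) (B : Submodule Rᵐᵒᵖ (H.X i j)) (hB : B ≤ rk Rᵐᵒᵖ _ k) :
    B = rk Rᵐᵒᵖ _ k ∨ B ≤ rk Rᵐᵒᵖ _ (k+1) := by
  obtain ⟨f, hf, hfr⟩ := H.embed i j k h
  have hBB : (B.comap f).map f = B := Submodule.map_comap_eq_of_le (hfr ▸ hB)
  by_cases hc : B.comap f = ⊤
  · left
    rw [← hBB, hc, ← hfr, LinearMap.range_eq_map]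
  · right
    have h1 := indec_local (H.indec i ⟨j.val + k, h⟩) _ hc
    rw [rk_succ, ← hfr, LinearMap.range_eq_map, radSub_map f hf, ← hBB]
    exact Submodule.map_mono h1

theorem HaradaData.rk_ne (H : HaradaData R) (i : Fin H.m) (j : Fin (H.n i)) (k : ℕ)
    (h : j.val + k < H.n i) : rk Rᵐᵒᵖ (H.X i j) (k+1) ≠ rk Rᵐᵒᵖ _ k := by
  obtain ⟨f, hf, hfr⟩ := H.embed i j k h
  intro hc
  apply indec_rad_ne (H.indec i ⟨j.val + k, h⟩)
  rw [rk_succ, ← hfr, LinearMap.range_eq_map, radSub_map f hf] at hc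
  exact Submodule.map_injective_of_injective hf hc

theorem HaradaData.good (H : HaradaData R) (i : Fin H.m) (j : Fin (H.n i)) :
    Good H.I (H.X i j) := by
  intro L hL
  have hle : rk Rᵐᵒᵖ (H.X i j) (H.n i - j.val) ≤ smulSub H.I (H.X i j) := by
    intro x hx
    have h1 := smulSub_mem H.I (toRight (H.idem i j) 1) (H.comp_le i j x hx)
    convert h1
    apply Subtype.ext
    rw [Submodule.coe_smul, toRight_coe, mul_one, op_smul_eq_mul,
      (mem_rightIdeal (H.idem i j) _).1 x.2]
  have claim : ∀ k ≤ H.n i - j.val, L ≤ rk Rᵐᵒᵖ (H.X i j) k ∨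
      ∃ k' < k, L = rk Rᵐᵒᵖ (H.X i j) k' := by
    intro k
    induction k with
    | zero => exact fun _ => Or.inl le_top
    | succ k ih =>
      intro hk
      rcases ih (by omega) with h1 | ⟨k', hk', h1⟩
      · rcases H.rk_dich i j k (by omega) L h1 with h2 | h2
        · exact Or.inr ⟨k, Nat.lt_succ_self k, h2⟩
        · exact Or.inl h2
      · exact Or.inr ⟨k', by omega, h1⟩
  rcases claim _ le_rfl with h1 | ⟨k, hk, h1⟩
  · refine ⟨⊥, inferInstance, ?_⟩
    rw [bot_sup_eq]
    exact le_antisymm hL (h1.trans hle)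
  · refine ⟨L, ?_, sup_eq_left.2 hL⟩
    obtain ⟨f, hf, hfr⟩ := H.embed i j k (by omega)
    rw [h1, ← hfr]
    exact Module.Projective.of_equiv (LinearEquiv.ofInjective f hf)

/-- Key lemma: a map `P_{i1} → P_{q1}` sending `rad^j` into `rad^{n_q}` has image in
`rad^{n_q}`. -/
theorem HaradaData.key (H : HaradaData R) (i q : Fin H.m) (j : ℕ) (hj : j < H.n i)
    (ψ : H.X i ⟨0, H.hn i⟩ →ₗ[Rᵐᵒᵖ] H.X q ⟨0, H.hn q⟩)
    (hψ : (rk Rᵐᵒᵖ _ j).map ψ ≤ rk Rᵐᵒᵖ _ (H.n q)) :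
    LinearMap.range ψ ≤ rk Rᵐᵒᵖ _ (H.n q) := by
  have claim : ∀ k ≤ H.n q, LinearMap.range ψ ≤ rk Rᵐᵒᵖ _ k := by
    intro k
    induction k with
    | zero => exact fun _ => le_top
    | succ k ih =>
      intro hk
      rcases H.rk_dich q ⟨0, H.hn q⟩ k (by simpa using hk) _ (ih (by omega)) with h1 | h1
      · exfalso
        have hkk : 0 + k < H.n q := by omega
        obtain ⟨f, hf, hfr⟩ := H.embed q ⟨0, H.hn q⟩ k (by simpa using hk)
        -- the surjection onto an indecomposable projective
        let e := LinearEquiv.ofInjective f hf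
        let e2 := LinearEquiv.ofEq _ _ (hfr.trans h1.symm)
        let s : H.X i ⟨0, H.hn i⟩ →ₗ[Rᵐᵒᵖ] H.X q ⟨0 + k, hkk⟩ :=
          (e.trans e2).symm.toLinearMap ∘ₗ ψ.rangeRestrict
        have hs : Function.Surjective s :=
          (e.trans e2).symm.surjective.comp ψ.surjective_rangeRestrict
        have hfs : ∀ x, f (s x) = ψ x := by
          intro x
          have h2 : (e.trans e2) (s x) = ψ.rangeRestrict x := by simp [s]
          exact congrArg Subtype.val h2
        obtain ⟨t, ht⟩ := Module.projective_lifting_property s LinearMap.id hs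
        have ht' : ∀ x, s (t x) = x := LinearMap.congr_fun ht
        have hcompl : IsCompl (LinearMap.ker s) (LinearMap.range t) := by
          constructor
          · rw [Submodule.disjoint_def]
            rintro _ hx ⟨y, rfl⟩
            rw [LinearMap.mem_ker, ht'] at hx
            rw [hx, map_zero]
          · rw [codisjoint_iff, eq_top_iff]
            intro x _
            have : x = (x - t (s x)) + t (s x) := by abel
            rw [this]
            refine Submodule.add_mem_sup ?_ ⟨_, rfl⟩
            rw [LinearMap.mem_ker, map_sub, ht', sub_self]
        have hker : LinearMap.ker s = ⊥ := by
          rcases (H.indec i _).2 _ _ hcompl with h3 | h3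
          · exact h3
          · exfalso
            have hnt := (H.indec q ⟨0 + k, hkk⟩).1
            obtain ⟨x, hx⟩ := exists_ne (0 : H.X q ⟨0 + k, hkk⟩)
            apply hx
            have h4 : t x ∈ LinearMap.range t := ⟨x, rfl⟩
            rw [h3, Submodule.mem_bot] at h4
            rw [← ht' x, h4, map_zero]
        have hsinj : Function.Injective s := LinearMap.ker_eq_bot.1 hker
        have hpq : (⟨i, ⟨0, H.hn i⟩⟩ : Σ i : Fin H.m, Fin (H.n i))
            = ⟨q, ⟨0 + k, hkk⟩⟩ := by
          by_contra hne
          exact (H.basic _ _ hne).false (LinearEquiv.ofBijective s ⟨hsinj, hs⟩)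
        have hψinj : Function.Injective ψ := by
          intro x y hxy
          rw [← hfs, ← hfs] at hxy
          exact hsinj (hf hxy)
        obtain ⟨rfl, h5⟩ := Sigma.mk.inj_iff.1 hpq
        have h6 : 0 = 0 + k := congrArg Fin.val (eq_of_heq h5)
        have hk0 : k = 0 := by omega
        have htop : LinearMap.range ψ = ⊤ := h1.trans (by rw [hk0]; first | done | rfl)
        have h7 := rk_range ψ hψinj j
        rw [htop] at h7
        rw [← h7] at hψ
        apply H.rk_ne i ⟨0, H.hn i⟩ j (by simpa using hj)
        refine le_antisymm (radSub_iter_anti _ (Nat.le_succ j)) ?_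
        exact (show rk Rᵐᵒᵖ _ j ≤ _ from hψ).trans (radSub_iter_anti _ hj)
      · exact h1
  exact claim _ le_rfl

/-- The embedding of `e_{ij}R` into `e_{i1}R`. -/
theorem HaradaData.emb0 (H : HaradaData R) (i : Fin H.m) (j : Fin (H.n i)) :
    ∃ f : H.X i j →ₗ[Rᵐᵒᵖ] H.X i ⟨0, H.hn i⟩,
      Function.Injective f ∧ LinearMap.range f = rk Rᵐᵒᵖ _ j.val := by
  obtain ⟨j, hj⟩ := j
  have h := H.embed i ⟨0, H.hn i⟩ j (by simpa using hj)
  have h2 : ∀ hh, (⟨(⟨0, H.hn i⟩ : Fin (H.n i)).val + j, hh⟩ : Fin (H.n i)) = ⟨j, hj⟩ :=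
    fun _ => Fin.ext (Nat.zero_add j)
  rw [h2] at h
  exact h

theorem HaradaData.key2 (H : HaradaData R) (i : Fin H.m) (j : Fin (H.n i)) (q : Fin H.m)
    (l : Fin (H.n q)) (ε : H.X i j →ₗ[Rᵐᵒᵖ] H.X i ⟨0, H.hn i⟩) (hε : Function.Injective ε)
    (hεr : LinearMap.range ε = rk Rᵐᵒᵖ _ j.val)
    (φ : H.X i j →ₗ[Rᵐᵒᵖ] H.X q l) (hφ : ∀ x, φ x ∈ rk Rᵐᵒᵖ _ (H.n q - l.val)) :
    ∃ ψ : H.X i ⟨0, H.hn i⟩ →ₗ[Rᵐᵒᵖ] H.X q l, (∀ x, ψ x ∈ rk Rᵐᵒᵖ _ (H.n q - l.val)) ∧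
      ∀ x, ψ (ε x) = φ x := by
  obtain ⟨η, hη, hηr⟩ := H.emb0 q l
  have hinj := H.inj q
  obtain ⟨ψ', hψ'⟩ := Module.Injective.out (R := Rᵐᵒᵖ) (Q := H.X q ⟨0, H.hn q⟩) ε hε (η ∘ₗ φ)
  have hJ : (rk Rᵐᵒᵖ (H.X q l) (H.n q - l.val)).map η = rk Rᵐᵒᵖ _ (H.n q) := by
    rw [← rk_range η hη, hηr, rk, rk, ← Function.iterate_add_apply]
    congr 2
    have := l.2
    omega
  have hr := H.key i q j.val j.2 ψ' (by
    rw [← hεr, ← hJ]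
    rintro _ ⟨_, ⟨x, rfl⟩, rfl⟩
    rw [hψ']
    exact ⟨φ x, hφ x, rfl⟩)
  rw [← hJ] at hr
  let e := LinearEquiv.ofInjective η hη
  let ψ := e.symm.toLinearMap ∘ₗ LinearMap.codRestrict (LinearMap.range η) ψ' (fun x => by
    obtain ⟨y, _, hy⟩ := hr ⟨x, rfl⟩
    exact ⟨y, hy⟩)
  have hψ : ∀ x, η (ψ x) = ψ' x := by
    intro x
    have h2 : e (ψ x) = LinearMap.codRestrict (LinearMap.range η) ψ' (fun x => by
      obtain ⟨y, _, hy⟩ := hr ⟨x, rfl⟩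
      exact ⟨y, hy⟩) x := by simp [ψ]
    exact congrArg Subtype.val h2
  refine ⟨ψ, fun x => ?_, fun x => ?_⟩
  · obtain ⟨y, hy, hyx⟩ := hr ⟨x, rfl⟩
    rw [← hψ] at hyx
    rw [← hη hyx]
    exact hy
  · apply hη
    rw [hψ, hψ', LinearMap.comp_apply]

theorem HaradaData.comp_I (H : HaradaData R) (p : Σ i : Fin H.m, Fin (H.n i)) (r : R)
    (hr : r ∈ H.I) :
    toRight (H.idem p.1 p.2) r ∈ rk Rᵐᵒᵖ (H.X p.1 p.2) (H.n p.1 - p.2.val) := by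
  have h : H.I ≤ (rk Rᵐᵒᵖ (H.X p.1 p.2) (H.n p.1 - p.2.val)).comap
      (toRight (H.idem p.1 p.2)) := by
    refine iSup_le fun q => ?_
    intro x hx
    rw [rk_sub] at hx
    obtain ⟨y, hy, rfl⟩ := hx
    have hy1 := (mem_rightIdeal (H.idem q.1 q.2) _).1 y.2
    rw [Submodule.mem_comap]
    by_cases hpq : p = q
    · subst hpq
      have h2 : toRight (H.idem p.1 p.2) ((rightIdeal R (H.e p.1 p.2)).subtype y) = y :=
        Subtype.ext hy1
      rw [h2]
      exact hy
    · convert Submodule.zero_mem _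
      apply Subtype.ext
      rw [toRight_coe, Submodule.subtype_apply, ← hy1, ← mul_assoc, H.orth p q hpq, zero_mul]
      rfl
  exact h hr


end Art

/-- The injective hull of `R`. -/
abbrev HaradaData.E (H : HaradaData R) : Type :=
  ∀ p : Σ i : Fin H.m, Fin (H.n i), H.X p.1 ⟨0, H.hn p.1⟩

theorem HaradaData.injE (H : HaradaData R) : Module.Injective Rᵐᵒᵖ H.E := by
  have := H.inj
  exact Module.Injective.pi _ _

theorem HaradaData.extProp [IsArtinianRing Rᵐᵒᵖ] (H : HaradaData R) :
    ∃ ι : R →ₗ[Rᵐᵒᵖ] H.E, ExtProp H.I H.E ι := by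
  have hε := fun p : Σ i : Fin H.m, Fin (H.n i) => H.emb0 p.1 p.2
  choose ε hε hεr using hε
  let ι : R →ₗ[Rᵐᵒᵖ] H.E := LinearMap.pi fun p => ε p ∘ₗ toRight (H.idem p.1 p.2)
  refine ⟨ι, ?_⟩
  intro r hr
  have hψ : ∀ p q : Σ i : Fin H.m, Fin (H.n i),
      ∃ ψ : H.X p.1 ⟨0, H.hn p.1⟩ →ₗ[Rᵐᵒᵖ] R, (∀ x, ψ x ∈ H.I) ∧
        ψ (ι 1 p) = H.e q.1 q.2 * (r * H.e p.1 p.2) := by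
    intro p q
    obtain ⟨ψ, h1, h2⟩ := H.key2 p.1 p.2 q.1 q.2 (ε p) (hε p) (hεr p)
      (elemMap (toRight (H.idem q.1 q.2) r) ∘ₗ (rightIdeal R (H.e p.1 p.2)).subtype)
      (fun x => Submodule.smul_mem _ _ (H.comp_I q r hr))
    refine ⟨(rightIdeal R (H.e q.1 q.2)).subtype ∘ₗ ψ, fun x => H.comp_le q.1 q.2 _ (h1 x), ?_⟩
    change ((ψ (ε p (toRight (H.idem p.1 p.2) 1)) : H.X q.1 q.2) : R) = _
    rw [h2, LinearMap.comp_apply, elemMap_apply, Submodule.coe_smul, toRight_coe,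
        Submodule.subtype_apply, toRight_coe, mul_one, op_smul_eq_mul, mul_assoc]
  choose ψ hψ hψε using hψ
  refine ⟨∑ p, ∑ q, ψ p q ∘ₗ LinearMap.proj p, fun x => ?_, ?_⟩
  · rw [LinearMap.sum_apply]
    refine Submodule.sum_mem _ fun p _ => ?_
    rw [LinearMap.sum_apply]
    exact Submodule.sum_mem _ fun q _ => hψ p q _
  · have h3 : ∀ p, (∑ q, ψ p q ∘ₗ LinearMap.proj p) (ι 1) = r * H.e p.1 p.2 := by
      intro p
      rw [LinearMap.sum_apply]
      have : ∀ q, (ψ p q ∘ₗ LinearMap.proj p) (ι 1) = H.e q.1 q.2 * (r * H.e p.1 p.2) :=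
        fun q => hψε p q
      rw [Finset.sum_congr rfl fun q _ => this q, ← Finset.sum_mul, H.sum_eq_one, one_mul]
    rw [LinearMap.sum_apply, Finset.sum_congr rfl fun p _ => h3 p, ← Finset.mul_sum,
      H.sum_eq_one, mul_one]

/-- The module `R`, as an external direct sum. -/
abbrev HaradaData.Y (H : HaradaData R) : Type :=
  ∀ p : Σ i : Fin H.m, Fin (H.n i), H.X p.1 p.2

theorem HaradaData.surjY (H : HaradaData R) :
    ∃ g : H.Y →ₗ[Rᵐᵒᵖ] R, Function.Surjective g := by
  let c : ∀ p : Σ i : Fin H.m, Fin (H.n i), H.Y →ₗ[Rᵐᵒᵖ] R := fun p =>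
    (rightIdeal R (H.e p.1 p.2)).subtype ∘ₗ
      LinearMap.proj (φ := fun p : Σ i : Fin H.m, Fin (H.n i) => H.X p.1 p.2) p
  refine ⟨∑ p, c p, ?_⟩
  intro x
  refine ⟨fun p => toRight (H.idem p.1 p.2) x, ?_⟩
  rw [LinearMap.sum_apply]
  refine Eq.trans (Finset.sum_congr rfl (g := fun p => H.e p.1 p.2 * x) fun p _ => rfl) ?_
  rw [← Finset.sum_mul, H.sum_eq_one, one_mul]

theorem HaradaData.cover [IsArtinianRing Rᵐᵒᵖ] (H : HaradaData R) {N : Type} [AddCommGroup N]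
    [Module Rᵐᵒᵖ N] [Module.Finite Rᵐᵒᵖ N] :
    ∃ (k : ℕ) (f : (Fin k → H.Y) →ₗ[Rᵐᵒᵖ] N), Function.Surjective f := by
  obtain ⟨k, f, hf⟩ := exists_fin_R (R := R) (T := N)
  obtain ⟨g, hg⟩ := H.surjY
  let G : (Fin k → H.Y) →ₗ[Rᵐᵒᵖ] (Fin k → R) := LinearMap.pi fun a => g ∘ₗ LinearMap.proj a
  have hG : Function.Surjective G := by
    intro x
    choose y hy using fun a => hg (x a)
    exact ⟨y, funext hy⟩
  exact ⟨k, f ∘ₗ G, hf.comp hG⟩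

theorem HaradaData.projY (H : HaradaData R) (k : ℕ) :
    Module.Projective Rᵐᵒᵖ (Fin k → H.Y) :=
  proj_pi _ fun _ => proj_pi _ fun _ => inferInstance

theorem HaradaData.finY [IsArtinianRing Rᵐᵒᵖ] (H : HaradaData R) (k : ℕ) :
    Module.Finite Rᵐᵒᵖ (Fin k → H.Y) :=
  have h1 : ∀ p : Σ i : Fin H.m, Fin (H.n i), Module.Finite Rᵐᵒᵖ (H.X p.1 p.2) :=
    fun _ => inferInstance
  have : Module.Finite Rᵐᵒᵖ H.Y := Module.Finite.pi
  Module.Finite.pi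

theorem HaradaData.goodY [IsArtinianRing Rᵐᵒᵖ] (H : HaradaData R) (k : ℕ) :
    Good H.I (Fin k → H.Y) :=
  Good.pi _ fun _ => Good.pi _ fun p => H.good p.1 p.2

/-! ### Modules over the quotient ring -/

section Quot

variable {S : Type} [Ring S] (π : R →+* S)

/-- A right `R`-module killed by the kernel of `π` is the restriction of an `S`-module. -/
theorem exists_restrict (hsurj : Function.Surjective π) (T : Type) [AddCommGroup T]
    [Module Rᵐᵒᵖ T] (h : ∀ r : R, π r = 0 → ∀ t : T, op r • t = 0) :
    ∃ N : ModuleCat.{0} Sᵐᵒᵖ, Nonempty (RestrictRight π ↥N ≃ₗ[Rᵐᵒᵖ] T) := by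
  choose σ hσ using hsurj
  have key : ∀ r r' : R, π r = π r' → ∀ t : T, op r • t = op r' • t := by
    intro r r' hr t
    rw [← sub_eq_zero, ← sub_smul, ← op_sub]
    exact h _ (by rw [map_sub, hr, sub_self]) t
  let inst : Module Sᵐᵒᵖ T :=
    { smul := fun s t => op (σ (unop s)) • t
      one_smul := fun t => (key _ 1 (by rw [hσ, map_one]; rfl) t).trans (by rw [op_one, one_smul])
      mul_smul := fun s s' t => (key _ (σ (unop s') * σ (unop s)) (by
        rw [hσ, map_mul, hσ, hσ]; rfl) t).trans (by rw [op_mul, mul_smul]; rfl)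
      smul_zero := fun s => smul_zero (op (σ (unop s)))
      smul_add := fun s t t' => smul_add (op (σ (unop s))) t t'
      add_smul := fun s s' t => (key _ (σ (unop s) + σ (unop s')) (by
        rw [hσ, map_add, hσ, hσ]; rfl) t).trans (by rw [op_add, add_smul]; rfl)
      zero_smul := fun t => (key _ 0 (by rw [hσ, map_zero]; rfl) t).trans (by
        rw [op_zero, zero_smul]) }
  refine ⟨ModuleCat.of Sᵐᵒᵖ T, ⟨?_⟩⟩
  exact
    { toFun := fun t => t
      invFun := fun t => t
      left_inv := fun _ => rfl
      right_inv := fun _ => rfl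
      map_add' := fun _ _ => rfl
      map_smul' := fun a t => key _ (unop a) (by rw [hσ]; rfl) t }

theorem restrict_smul {N : Type} [AddCommGroup N] [Module Sᵐᵒᵖ N] (r : R)
    (x : RestrictRight π N) :
    (op r • x : RestrictRight π N) = (op (π r) • (show N from x) : N) := rfl

theorem restrict_equiv (hsurj : Function.Surjective π) {N N' : Type} [AddCommGroup N]
    [Module Sᵐᵒᵖ N] [AddCommGroup N'] [Module Sᵐᵒᵖ N']
    (e : RestrictRight π N ≃ₗ[Rᵐᵒᵖ] RestrictRight π N') : Nonempty (N ≃ₗ[Sᵐᵒᵖ] N') :=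
  ⟨{ toFun := fun x => e x
     invFun := fun x => e.symm x
     left_inv := e.left_inv
     right_inv := e.right_inv
     map_add' := fun x y => e.map_add x y
     map_smul' := fun s x => by
      obtain ⟨r, hr⟩ := hsurj (unop s)
      have hs : s = op (π r) := by rw [hr, op_unop]
      rw [hs]
      exact e.map_smul (op r) x }⟩

theorem restrict_equiv' {N N' : Type} [AddCommGroup N]
    [Module Sᵐᵒᵖ N] [AddCommGroup N'] [Module Sᵐᵒᵖ N']
    (e : N ≃ₗ[Sᵐᵒᵖ] N') : Nonempty (RestrictRight π N ≃ₗ[Rᵐᵒᵖ] RestrictRight π N') :=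
  ⟨{ toFun := fun x => e x
     invFun := fun x => e.symm x
     left_inv := e.left_inv
     right_inv := e.right_inv
     map_add' := fun x y => e.map_add x y
     map_smul' := fun a x => e.map_smul (op (π (unop a))) x }⟩

theorem restrict_finite (hsurj : Function.Surjective π) {N : Type} [AddCommGroup N]
    [Module Sᵐᵒᵖ N] :
    Module.Finite Sᵐᵒᵖ N ↔ Module.Finite Rᵐᵒᵖ (RestrictRight π N) := by
  let T : Set N → Submodule Rᵐᵒᵖ (RestrictRight π N) := fun s =>
    Submodule.span Rᵐᵒᵖ (M := RestrictRight π N) s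
  have hcl : ∀ s : Set N, ∀ x : N, x ∈ Submodule.span Sᵐᵒᵖ s ↔
      (show RestrictRight π N from x) ∈ T s := by
    intro s x
    constructor
    · intro hx
      have hz : (0 : RestrictRight π N) ∈ T s := Submodule.zero_mem _
      have ha : ∀ x y : RestrictRight π N, x ∈ T s → y ∈ T s → x + y ∈ T s :=
        fun x y hx hy => Submodule.add_mem _ hx hy
      refine Submodule.span_induction (R := Sᵐᵒᵖ) (M := N) (s := s) (p := fun y _ =>
        (show RestrictRight π N from y) ∈ T s) ?_ hz ?_ ?_ hx
      · exact fun x hx => Submodule.subset_span (R := Rᵐᵒᵖ) (M := RestrictRight π N) hx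
      · exact fun x y _ _ hx hy => ha x y hx hy
      · intro a x _ hx
        obtain ⟨r, hr⟩ := hsurj (unop a)
        have hs : a = op (π r) := by rw [hr, op_unop]
        rw [hs]
        exact Submodule.smul_mem (T s) (op r) hx
    · intro hx
      refine Submodule.span_induction (R := Rᵐᵒᵖ) (M := RestrictRight π N) (s := s) (p := fun y _ =>
        (show N from y) ∈ Submodule.span Sᵐᵒᵖ s) ?_ ?_ ?_ ?_ hx
      · exact fun x hx => Submodule.subset_span hx
      · exact Submodule.zero_mem _
      · exact fun x y _ _ hx hy => Submodule.add_mem _ hx hy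
      · exact fun a x _ hx => Submodule.smul_mem _ (op (π (unop a))) hx
  rw [Module.finite_def, Module.finite_def, Submodule.fg_def, Submodule.fg_def]
  constructor
  · rintro ⟨s, hs, h⟩
    refine ⟨s, hs, ?_⟩
    rw [eq_top_iff]
    intro x _
    exact (hcl s x).1 (h ▸ Submodule.mem_top)
  · rintro ⟨s, hs, h⟩
    refine ⟨s, hs, ?_⟩
    rw [eq_top_iff]
    intro x _
    refine (hcl s x).2 ?_
    rw [show T s = ⊤ from h]
    exact Submodule.mem_top

end Quot
/-- Lemma 4.1(1).  The functor `F = − ⊗_R R̄`, where `R̄ = R/I` (here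
presented by a surjective ring homomorphism `π : R → S` with kernel `I`, and with
`F T = T/T·I` equipped with its natural `S`-module structure), induces a bijection from the
set of isomorphism classes of finitely generated right `R`-modules of projective dimension
at most one onto the set of isomorphism classes of finitely generated right `S`-modules. -/
theorem statement12 (K R : Type) [Field K] [IsAlgClosed K] [Ring R] [Algebra K R]
    [FiniteDimensional K R] (H : HaradaData R)
    (S : Type) [Ring S] (π : R →+* S) (hsurj : Function.Surjective π)
    (hker : ∀ x : R, π x = 0 ↔ x ∈ H.I) :
    ∃ Φ : Quotient (isoSetoid Rᵐᵒᵖ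
            fun M => Module.Finite Rᵐᵒᵖ ↥M ∧ PdLeOne Rᵐᵒᵖ ↥M) →
          Quotient (isoSetoid Sᵐᵒᵖ fun M => Module.Finite Sᵐᵒᵖ ↥M),
      Function.Bijective Φ ∧
      ∀ (T : {M : ModuleCat.{0} Rᵐᵒᵖ // Module.Finite Rᵐᵒᵖ ↥M ∧ PdLeOne Rᵐᵒᵖ ↥M})
        (N : {M : ModuleCat.{0} Sᵐᵒᵖ // Module.Finite Sᵐᵒᵖ ↥M}),
        Nonempty (RestrictRight π ↥N.1 ≃ₗ[Rᵐᵒᵖ] (↥T.1 ⧸ smulSub H.I ↥T.1)) →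
        Φ (Quotient.mk _ T) = Quotient.mk _ N := by
  have hart : IsArtinianRing Rᵐᵒᵖ := IsArtinianRing.of_finite K Rᵐᵒᵖ
  obtain ⟨ι, hext⟩ := H.extProp
  have hinjE := H.injE
  have hex : ∀ T : {M : ModuleCat.{0} Rᵐᵒᵖ // Module.Finite Rᵐᵒᵖ ↥M ∧ PdLeOne Rᵐᵒᵖ ↥M},
      ∃ N : {M : ModuleCat.{0} Sᵐᵒᵖ // Module.Finite Sᵐᵒᵖ ↥M},
        Nonempty (RestrictRight π ↥N.1 ≃ₗ[Rᵐᵒᵖ] (↥T.1 ⧸ smulSub H.I ↥T.1)) := by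
    intro T
    obtain ⟨N, ⟨e⟩⟩ := exists_restrict π hsurj (↥T.1 ⧸ smulSub H.I ↥T.1) (by
      intro r hr t
      obtain ⟨t, rfl⟩ := Submodule.mkQ_surjective _ t
      rw [← map_smul, Submodule.mkQ_apply, Submodule.Quotient.mk_eq_zero]
      exact smulSub_mem _ _ ((hker r).1 hr))
    have hfin := T.2.1
    have hfin2 : Module.Finite Rᵐᵒᵖ (RestrictRight π ↥N) := Module.Finite.equiv e.symm
    exact ⟨⟨N, (restrict_finite π hsurj).2 hfin2⟩, ⟨e⟩⟩
  choose G hG using hex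
  have hwd : ∀ (T T' : {M : ModuleCat.{0} Rᵐᵒᵖ // Module.Finite Rᵐᵒᵖ ↥M ∧ PdLeOne Rᵐᵒᵖ ↥M})
      (N N' : {M : ModuleCat.{0} Sᵐᵒᵖ // Module.Finite Sᵐᵒᵖ ↥M}),
      Nonempty (RestrictRight π ↥N.1 ≃ₗ[Rᵐᵒᵖ] (↥T.1 ⧸ smulSub H.I ↥T.1)) →
      Nonempty (RestrictRight π ↥N'.1 ≃ₗ[Rᵐᵒᵖ] (↥T'.1 ⧸ smulSub H.I ↥T'.1)) →
      Nonempty (↥T.1 ≃ₗ[Rᵐᵒᵖ] ↥T'.1) → Nonempty (↥N.1 ≃ₗ[Sᵐᵒᵖ] ↥N'.1) := by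
    rintro T T' N N' ⟨e⟩ ⟨e'⟩ ⟨f⟩
    have hq := Submodule.Quotient.equiv (smulSub H.I ↥T.1) (smulSub H.I ↥T'.1) f
      (smulSub_map_eq H.I f.toLinearMap f.surjective)
    exact restrict_equiv π hsurj ((e.trans hq).trans e'.symm)
  refine ⟨Quotient.lift (fun T => Quotient.mk _ (G T)) ?_, ⟨?_, ?_⟩, ?_⟩
  · intro T T' h
    exact Quotient.sound (hwd T T' _ _ (hG T) (hG T') h)
  · intro x y
    induction x using Quotient.inductionOn with | h T => ?_
    induction y using Quotient.inductionOn with | h T' => ?_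
    intro hxy
    obtain ⟨e⟩ : Nonempty (↥(G T).1 ≃ₗ[Sᵐᵒᵖ] ↥(G T').1) := Quotient.exact hxy
    obtain ⟨e'⟩ := restrict_equiv' π e
    obtain ⟨a⟩ := hG T
    obtain ⟨b⟩ := hG T'
    have h1 := T.2.1
    have h2 := T'.2.1
    exact Quotient.sound (hext.iso H.I_le_jac T.2.2 T'.2.2 ((a.symm.trans e').trans b))
  · intro y
    induction y using Quotient.inductionOn with | h N => ?_
    have hfin : Module.Finite Rᵐᵒᵖ (RestrictRight π ↥N.1) := (restrict_finite π hsurj).1 N.2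
    obtain ⟨k, f, hf⟩ := H.cover (N := RestrictRight π ↥N.1)
    have hp := H.projY k
    have hfY := H.finY k
    have hbot : smulSub H.I (RestrictRight π ↥N.1) = ⊥ := by
      rw [eq_bot_iff]
      refine Submodule.span_le.2 ?_
      rintro x ⟨t, r, hr, rfl⟩
      rw [restrict_smul, (hker r).2 hr, op_zero, zero_smul]
      exact Submodule.zero_mem _
    obtain ⟨Q, hQ, e⟩ := (H.goodY k).dense hbot f hf
    let T : {M : ModuleCat.{0} Rᵐᵒᵖ // Module.Finite Rᵐᵒᵖ ↥M ∧ PdLeOne Rᵐᵒᵖ ↥M} :=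
      ⟨ModuleCat.of Rᵐᵒᵖ ((Fin k → H.Y) ⧸ Q), Module.Finite.quotient _ _, hQ⟩
    refine ⟨Quotient.mk _ T, Quotient.sound ?_⟩
    exact hwd T T _ _ (hG T) e ⟨LinearEquiv.refl _ _⟩
  · intro T N h
    exact Quotient.sound (hwd T T _ _ (hG T) h ⟨LinearEquiv.refl _ _⟩)
end

section
/- Let R be a basic left Harada algebra with modules P_{ij} := rad^{j-1}(e_{i1}R) as below, and fix 1 ≤ i ≤ m, 1 ≤ j ≤ n_i and 1 ≤ k < l ≤ n_i. Then the natural projection φ : P_{ij} → P_{ij}/rad(P_{i n_i}) induces, by composition, an isomorphism Hom_R(P_{ij}/rad(P_{i n_i}), P_{ik}/P_{il}) → Hom_R(P_{ij}, P_{ik}/P_{il}). -/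
/-!
Common setup.  `K` is an algebraically closed field and `R` a finite-dimensional associative
unital `K`-algebra.  Right `R`-modules are formalized as modules over the opposite ring `Rᵐᵒᵖ`
(so that `MulOpposite.op r • x = x * r`).
-/

open MulOpposite

variable {R : Type} [Ring R]

namespace Harada14

section General

variable {A M N : Type} [Ring A] [AddCommGroup M] [Module A M] [AddCommGroup N] [Module A N]

theorem radSub_eq (X : Submodule A M) :
    radSub X = Submodule.map X.subtype (Module.jacobson A X) := rfl

theorem radSub_le (X : Submodule A M) : radSub X ≤ X := Submodule.map_subtype_le _ _

theorem radSub_equiv (X : Submodule A M) (Y : Submodule A N) (e : X ≃ₗ[A] Y) :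
    Nonempty (radSub X ≃ₗ[A] radSub Y) := by
  have h : Submodule.map (e : X →ₗ[A] Y) (Module.jacobson A X) = Module.jacobson A Y :=
    Module.map_jacobson_of_bijective e.bijective
  have e1 := Submodule.equivMapOfInjective X.subtype X.injective_subtype (Module.jacobson A X)
  have e2 := Submodule.equivMapOfInjective Y.subtype Y.injective_subtype (Module.jacobson A Y)
  have e3 := e.submoduleMap (Module.jacobson A X)
  have e4 := LinearEquiv.ofEq _ _ h
  exact ⟨e1.symm.trans (e3.trans (e4.trans e2))⟩

theorem indec_equiv (e : M ≃ₗ[A] N) (h : IsIndecomposableMod A M) :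
    IsIndecomposableMod A N := by
  obtain ⟨h1, h2⟩ := h
  refine ⟨e.symm.toEquiv.nontrivial, fun X Y hXY => ?_⟩
  have := (Submodule.orderIsoMapComap e.symm).isCompl hXY
  rcases h2 _ _ this with h | h
  · left
    exact (map_eq_bot_iff (Submodule.orderIsoMapComap e.symm)).1 h
  · right
    exact (map_eq_bot_iff (Submodule.orderIsoMapComap e.symm)).1 h

/-- A proper submodule of an indecomposable projective module of finite length lies in the
radical. -/
theorem le_jacobson [IsArtinian A M] [IsNoetherian A M] [Module.Projective A M]
    (h : IsIndecomposableMod A M) (X : Submodule A M) (hX : X ≠ ⊤) :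
    X ≤ Module.jacobson A M := by
  refine le_sInf fun C hC => ?_
  by_contra hXC
  have hsup : X ⊔ C = ⊤ := by
    apply hC.2
    rw [right_lt_sup]
    exact hXC
  have hsurj : Function.Surjective (C.mkQ ∘ₗ X.subtype) := by
    intro y
    obtain ⟨m, rfl⟩ := C.mkQ_surjective y
    have hm : m ∈ X ⊔ C := hsup ▸ Submodule.mem_top
    obtain ⟨x, hx, c, hc, rfl⟩ := Submodule.mem_sup.1 hm
    refine ⟨⟨x, hx⟩, ?_⟩
    simpa using hc
  obtain ⟨g, hg⟩ := Module.projective_lifting_property _ C.mkQ hsurj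
  let f : Module.End A M := X.subtype ∘ₗ g
  have hf : ∀ x, f x - x ∈ C := by
    intro x
    have := LinearMap.congr_fun hg x
    exact (Submodule.Quotient.eq C).1 this
  have hfn : ∀ (n : ℕ) x, (f ^ n) x - x ∈ C := by
    intro n
    induction n with
    | zero => intro x; simp
    | succ n ih =>
      intro x
      have := C.add_mem (ih (f x)) (hf x)
      rw [pow_succ]
      simpa using this
  obtain ⟨n, hn⟩ := Filter.eventually_atTop.1 (LinearMap.eventually_isCompl_ker_pow_range_pow f)
  have hc := hn (n + 1) (Nat.le_succ n)
  rcases h.2 _ _ hc with h0 | h0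
  · rw [h0] at hc
    have htop : LinearMap.range (f ^ (n + 1)) = ⊤ := by simpa using hc.sup_eq_top
    apply hX
    rw [eq_top_iff, ← htop]
    rintro _ ⟨x, rfl⟩
    rw [pow_succ']
    exact (g ((f ^ n) x)).2
  · apply hC.1
    rw [eq_top_iff]
    intro x _
    have h1 := hfn (n + 1) x
    rw [LinearMap.range_eq_bot.1 h0] at h1
    simpa using h1

theorem le_radSub (X Y : Submodule A M) [IsArtinian A X] [IsNoetherian A X]
    [Module.Projective A X] (h : IsIndecomposableMod A X) (hY : Y ≤ X) (hne : Y ≠ X) :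
    Y ≤ radSub X := by
  have hle := le_jacobson h (Submodule.comap X.subtype Y) (by
    intro ht
    apply hne
    apply le_antisymm hY
    simpa using ht)
  intro y hy
  exact ⟨⟨y, hY hy⟩, hle hy, rfl⟩

theorem bijective_of_surjective [Module.Projective A N] [Nontrivial N]
    (h : IsIndecomposableMod A M) (f : M →ₗ[A] N) (hf : Function.Surjective f) :
    Function.Bijective f := by
  obtain ⟨g, hg⟩ := f.exists_rightInverse_of_surjective (LinearMap.range_eq_top.2 hf)
  have hg' : ∀ x, f (g x) = x := fun x => LinearMap.congr_fun hg x
  have hc : IsCompl (LinearMap.ker f) (LinearMap.range g) := by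
    constructor
    · rw [Submodule.disjoint_def]
      rintro _ hx ⟨y, rfl⟩
      rw [LinearMap.mem_ker, hg'] at hx
      simp [hx]
    · rw [codisjoint_iff, eq_top_iff]
      intro x _
      refine Submodule.mem_sup.2 ⟨x - g (f x), ?_, g (f x), ⟨_, rfl⟩, by simp⟩
      simp [hg']
  rcases h.2 _ _ hc with h0 | h0
  · exact ⟨LinearMap.ker_eq_bot.1 h0, hf⟩
  · exfalso
    obtain ⟨y, hy⟩ := exists_ne (0 : N)
    apply hy
    rw [← hg' y, LinearMap.range_eq_bot.1 h0]
    simp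

theorem rad_iter_le (X : Submodule A M) (s t : ℕ) (h : s ≤ t) : radSub^[t] X ≤ radSub^[s] X := by
  induction t, h using Nat.le_induction with
  | base => exact le_rfl
  | succ t _ ih =>
    rw [Function.iterate_succ_apply']
    exact (radSub_le _).trans ih

theorem rad_iter_map (X : Submodule A M) (Y : Submodule A N) (f : X →ₗ[A] Y) (t : ℕ) :
    ∀ x : X, (x : M) ∈ radSub^[t] X → (f x : N) ∈ radSub^[t] Y := by
  induction t with
  | zero => intro x _; exact (f x).2
  | succ t ih =>
    intro x hx
    rw [Function.iterate_succ_apply'] at hx ⊢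
    have hle := rad_iter_le X 0 t (Nat.zero_le t)
    let g : ↥(radSub^[t] X) →ₗ[A] ↥(radSub^[t] Y) :=
      LinearMap.codRestrict _ (Y.subtype ∘ₗ f ∘ₗ Submodule.inclusion hle)
        (fun z => ih _ z.2)
    obtain ⟨z, hz, hzx⟩ := hx
    refine ⟨g z, Module.le_comap_jacobson g hz, ?_⟩
    have : Submodule.inclusion hle z = x := Subtype.ext hzx
    exact congrArg (fun w => (f w : N)) this

end General

section Ring

variable {S : Type} [Ring S]

theorem projective_rightIdeal (e : S) (he : IsIdempotentElem e) :
    Module.Projective Sᵐᵒᵖ (rightIdeal S e) := by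
  have : Module.Projective Sᵐᵒᵖ S :=
    Module.Projective.of_equiv (MulOpposite.opLinearEquiv Sᵐᵒᵖ (M := S)).symm
  have hmem : ∀ x : S, e * x ∈ rightIdeal S e := fun x =>
    Submodule.mem_span_singleton.2 ⟨op x, rfl⟩
  let p : S →ₗ[Sᵐᵒᵖ] S :=
    { toFun := fun x => e * x
      map_add' := mul_add e
      map_smul' := fun r x => by simp [MulOpposite.smul_eq_mul_unop, mul_assoc] }
  refine Module.Projective.of_split (rightIdeal S e).subtype
    (LinearMap.codRestrict (rightIdeal S e) p hmem) ?_
  ext ⟨x, hx⟩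
  obtain ⟨r, rfl⟩ := Submodule.mem_span_singleton.1 hx
  change e * (r • e) = r • e
  simp only [MulOpposite.smul_eq_mul_unop, ← mul_assoc, he.eq]

variable (H : HaradaData S) (i : Fin H.m)

theorem P_equiv (t : ℕ) : ∀ ht : t < H.n i,
    Nonempty (rightIdeal S (H.e i ⟨t, ht⟩) ≃ₗ[Sᵐᵒᵖ] H.P i ⟨t, ht⟩) := by
  induction t with
  | zero => intro ht; exact ⟨LinearEquiv.refl _ _⟩
  | succ t ih =>
    intro ht
    obtain ⟨e1⟩ := ih (Nat.lt_of_succ_lt ht)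
    obtain ⟨e2⟩ := H.rad_iso i ⟨t + 1, ht⟩ (Nat.succ_pos t)
    obtain ⟨e3⟩ := radSub_equiv _ _ e1
    have h : H.P i ⟨t + 1, ht⟩ = radSub (H.P i ⟨t, Nat.lt_of_succ_lt ht⟩) := by
      simp only [HaradaData.P, Function.iterate_succ_apply']
    rw [h]
    exact ⟨e2.trans e3⟩

theorem P_le {s t : Fin (H.n i)} (h : s ≤ t) : H.P i t ≤ H.P i s := rad_iter_le _ _ _ h

theorem P_proj (t : Fin (H.n i)) : Module.Projective Sᵐᵒᵖ (H.P i t) := by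
  obtain ⟨e⟩ := P_equiv H i t t.2
  have := projective_rightIdeal _ (H.idem i t)
  exact Module.Projective.of_equiv e

theorem P_indec (t : Fin (H.n i)) : IsIndecomposableMod Sᵐᵒᵖ (H.P i t) := by
  obtain ⟨e⟩ := P_equiv H i t t.2
  exact indec_equiv e (H.indec i t)

theorem P_inj {s t : Fin (H.n i)} (e : H.P i s ≃ₗ[Sᵐᵒᵖ] H.P i t) : s = t := by
  by_contra hne
  obtain ⟨e1⟩ := P_equiv H i s s.2
  obtain ⟨e2⟩ := P_equiv H i t t.2
  refine (H.basic ⟨i, s⟩ ⟨i, t⟩ (fun h => hne ?_)).false (e1.trans (e.trans e2.symm))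
  simpa using h

theorem lift_mem [IsArtinian Sᵐᵒᵖ S] [IsNoetherian Sᵐᵒᵖ S] (j k l : Fin (H.n i))
    (hkl : k < l) (h : H.P i j →ₗ[Sᵐᵒᵖ] H.P i k) (x : H.P i j)
    (hx : (x : S) ∈ radSub (H.P i (H.last i))) : (h x : S) ∈ H.P i l := by
  have key : ∀ t : ℕ, ∀ ht : t < H.n i, k.val ≤ t → t ≤ l.val →
      (∀ y, (h y : S) ∈ H.P i ⟨t, ht⟩) ∨ (h x : S) ∈ H.P i l := by
    intro t ht hkt
    induction t, hkt using Nat.le_induction with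
    | base => intro _; exact Or.inl fun y => (h y).2
    | succ t hkt ih =>
      intro htl
      have ht' : t < H.n i := Nat.lt_of_succ_lt ht
      rcases ih ht' (by omega) with h1 | h1
      swap
      · exact Or.inr h1
      let g : H.P i j →ₗ[Sᵐᵒᵖ] H.P i ⟨t, ht'⟩ :=
        LinearMap.codRestrict _ ((H.P i k).subtype ∘ₗ h) h1
      let Y : Submodule Sᵐᵒᵖ S := LinearMap.range ((H.P i k).subtype ∘ₗ h)
      have hY : Y ≤ H.P i ⟨t, ht'⟩ := by
        rintro _ ⟨y, rfl⟩
        exact h1 y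
      have := P_proj H i ⟨t, ht'⟩
      by_cases hYe : Y = H.P i ⟨t, ht'⟩
      · right
        have hsurj : Function.Surjective g := by
          rintro ⟨z, hz⟩
          rw [← hYe] at hz
          obtain ⟨y, hy⟩ := hz
          exact ⟨y, Subtype.ext hy⟩
        have := (P_indec H i ⟨t, ht'⟩).1
        have hb := bijective_of_surjective (P_indec H i j) g hsurj
        have hjt := P_inj H i (LinearEquiv.ofBijective g hb)
        have hjv : j.val = t := congrArg Fin.val hjt
        have e1 : radSub (H.P i (H.last i)) = radSub^[H.n i - t] (H.P i j) := by
          have : H.n i - t + t = H.n i - 1 + 1 := by omega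
          simp only [HaradaData.P, hjv, ← Function.iterate_add_apply, this, HaradaData.last]
          rw [Function.iterate_succ_apply']
        have h2 := rad_iter_map _ _ g (H.n i - t) x (e1 ▸ hx)
        have e3 : radSub^[H.n i - t] (H.P i ⟨t, ht'⟩) ≤ H.P i l := by
          simp only [HaradaData.P, ← Function.iterate_add_apply]
          apply rad_iter_le
          have := l.2
          omega
        exact e3 h2
      · left
        have := le_radSub _ _ (P_indec H i ⟨t, ht'⟩) hY hYe
        intro y
        have h3 := this ⟨y, rfl⟩
        have e4 : H.P i ⟨t + 1, ht⟩ = radSub (H.P i ⟨t, ht'⟩) := by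
          simp only [HaradaData.P, Function.iterate_succ_apply']
        rw [e4]
        exact h3
  rcases key l l.2 hkl.le le_rfl with h1 | h1
  · exact h1 x
  · exact h1

end Ring

end Harada14

/-- Lemma 4.3.  The natural projection
`φ : P_{ij} → P_{ij}/rad(P_{i n_i})` induces, by composition, an isomorphism
`Hom_R(P_{ij}/rad(P_{i n_i}), P_{ik}/P_{il}) → Hom_R(P_{ij}, P_{ik}/P_{il})`. -/
theorem statement14 (K R : Type) [Field K] [IsAlgClosed K] [Ring R] [Algebra K R]
    [FiniteDimensional K R] (H : HaradaData R) (i : Fin H.m) (j k l : Fin (H.n i))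
    (hkl : k < l) :
    Function.Bijective
      (fun g : (↥(H.P i j) ⧸ Submodule.comap (H.P i j).subtype
          (radSub (H.P i (H.last i)))) →ₗ[Rᵐᵒᵖ] H.Quot i k l =>
        g.comp (Submodule.comap (H.P i j).subtype (radSub (H.P i (H.last i)))).mkQ) := by
  have : IsArtinian Rᵐᵒᵖ R := isArtinian_of_tower K inferInstance
  have : IsNoetherian Rᵐᵒᵖ R := isNoetherian_of_tower K inferInstance
  constructor
  · intro g g' hgg
    exact LinearMap.ext fun x => by
      obtain ⟨y, rfl⟩ := Submodule.mkQ_surjective _ x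
      exact LinearMap.congr_fun hgg y
  · intro f
    have := Harada14.P_proj H i j
    obtain ⟨h, hh⟩ := Module.projective_lifting_property
      (Submodule.comap (H.P i k).subtype (H.P i l)).mkQ f (Submodule.mkQ_surjective _)
    refine ⟨Submodule.liftQ _ f ?_, Submodule.liftQ_mkQ _ _ _⟩
    intro x hx
    rw [LinearMap.mem_ker, ← hh]
    have := Harada14.lift_mem H i j k l hkl h x hx
    simpa using this
end
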